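/- For every legal sequence σ of moves in the auxiliary game whose initial position equals its resulting position, the flow through the cycle vertices does not depend on the vertex: F(σ, 0, t) = F(σ, 0, t′) for all t, t′ ∈ ℤ/3mℤ. -/

import Mathlib

/-!
The auxiliary game of Shitov, "Chess God's number grows exponentially".

Fix `m ≥ 1`.  The graph `G` has cycle vertices `(0,t)` for `t ∈ ℤ/3m` and triangle
vertices `(i,j)` for `1 ≤ i ≤ m`, `j ∈ {1,2,3}`.  We use 0-based indices: the
triangle vertex `(i,j)` of the paper (with `1 ≤ i ≤ m`, `1 ≤ j ≤ 3`) is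
`Vtx.tri ⟨i-1⟩ ⟨j-1⟩`, and its paired cycle vertex `(0, 3i+j-3)` is
`Vtx.cycle (pairC ⟨i-1⟩ ⟨j-1⟩)` where `pairC i j = 3*i + j + 1 (mod 3m)`.
-/

namespace AuxGame

/-- What occupies a vertex: nothing, the chip, or a switch. -/
inductive Occ : Type
  | empty : Occ
  | chip : Occ
  | switch : Occ
deriving DecidableEq

/-- Vertices of the graph `G`: the big cycle of length `3m`, and `m` triangles. -/
inductive Vtx (m : ℕ) : Type
  | cycle : ZMod (3 * m) → Vtx m
  | tri : Fin m → ZMod 3 → Vtx m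
deriving DecidableEq

/-- The cycle vertex paired with the triangle vertex `(i,j)` (0-based):
this is the vertex `(0, 3i+j-3)` of the paper. -/
def pairC {m : ℕ} (i : Fin m) (j : ZMod 3) : ZMod (3 * m) :=
  ((3 * i.val + j.val + 1 : ℕ) : ZMod (3 * m))

/-- Adjacency in `G`: consecutive vertices of the big cycle, and distinct
vertices of one triangle. -/
def Adjacent {m : ℕ} : Vtx m → Vtx m → Prop
  | .cycle t, .cycle t' => t' = t + 1 ∨ t' = t - 1
  | .tri i j, .tri i' j' => i = i' ∧ j ≠ j'
  | _, _ => False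

/-- `u` and `v` form a pair `{(i,j), (0,3i+j-3)}` (in either order). -/
def IsPair {m : ℕ} : Vtx m → Vtx m → Prop
  | .tri i j, .cycle t => t = pairC i j
  | .cycle t, .tri i j => t = pairC i j
  | _, _ => False

/-- A position of the auxiliary game: every vertex is empty, or carries the chip,
or carries (exactly) one switch; there is exactly one chip; and for every pair
`{(i,j), (0,3i+j-3)}` at least one of the two vertices carries a switch. -/
structure Pos (m : ℕ) where
  occ : Vtx m → Occ
  chip_exists_unique : ∃! v : Vtx m, occ v = Occ.chip
  switch_pair : ∀ (i : Fin m) (j : ZMod 3),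
    occ (Vtx.tri i j) = Occ.switch ∨ occ (Vtx.cycle (pairC i j)) = Occ.switch

/-- A single move: the chip moves from vertex `from'` to vertex `to'`,
transforming position `src` into position `dst`. -/
structure Move (m : ℕ) where
  src : Pos m
  dst : Pos m
  from' : Vtx m
  to' : Vtx m

/-- Legality of a single move: either a *jump* (the chip moves to an adjacent
vacant vertex of its triangle, or to an adjacent vacant vertex of the cycle),
or a *swap* (the chip, standing on one vertex of a pair, is exchanged with the
switch on the other vertex of that pair).  In both cases the destination gets
the chip, the source gets whatever was at the destination (nothing for a jump,
the switch for a swap), and all other vertices are unchanged. -/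
def Move.Legal {m : ℕ} (mv : Move m) : Prop :=
  mv.src.occ mv.from' = Occ.chip ∧
  ((Adjacent mv.from' mv.to' ∧ mv.src.occ mv.to' = Occ.empty) ∨
    (IsPair mv.from' mv.to' ∧ mv.src.occ mv.to' = Occ.switch)) ∧
  mv.dst.occ mv.to' = Occ.chip ∧
  mv.dst.occ mv.from' = mv.src.occ mv.to' ∧
  ∀ w : Vtx m, w ≠ mv.from' → w ≠ mv.to' → mv.dst.occ w = mv.src.occ w

/-- `Leads σ A B`: `σ` is a legal sequence of moves with initial position `A`
and resulting position `B` (each move is legal, and the resulting position of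
each move is the initial position of the next one). -/
inductive Leads {m : ℕ} : List (Move m) → Pos m → Pos m → Prop
  | nil (A : Pos m) : Leads [] A A
  | cons (mv : Move m) (σ : List (Move m)) (B : Pos m) :
      mv.Legal → Leads σ mv.dst B → Leads (mv :: σ) mv.src B

/-- `σ` is a legal sequence of moves. -/
def LegalSeq {m : ℕ} (σ : List (Move m)) : Prop :=
  ∃ A B : Pos m, Leads σ A B

/-- `#(σ, u, v)`: the number of single moves in `σ` carrying the chip from
vertex `u` to vertex `v` (used with `u`, `v` in one component, where such moves
are exactly jumps). -/
def jmpCount {m : ℕ} (σ : List (Move m)) (u v : Vtx m) : ℕ :=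
  (σ.filter fun mv => decide (mv.from' = u ∧ mv.to' = v)).length

/-- The successor of a vertex in its own component: `(0,t) ↦ (0,t+1)` and
`(i,j) ↦ (i,j+1 mod 3)`. -/
def nxt {m : ℕ} : Vtx m → Vtx m
  | .cycle t => .cycle (t + 1)
  | .tri i j => .tri i (j + 1)

/-- The predecessor of a vertex in its own component. -/
def prv {m : ℕ} : Vtx m → Vtx m
  | .cycle t => .cycle (t - 1)
  | .tri i j => .tri i (j - 1)

/-- Twice the flow through a vertex `v = (i₀,j₀)`:
`#(σ,i₀,j₀-1,j₀) + #(σ,i₀,j₀,j₀+1) - #(σ,i₀,j₀+1,j₀) - #(σ,i₀,j₀,j₀-1)` as an integer. -/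
def dflow {m : ℕ} (σ : List (Move m)) (v : Vtx m) : ℤ :=
  (jmpCount σ (prv v) v : ℤ) + (jmpCount σ v (nxt v) : ℤ)
    - (jmpCount σ (nxt v) v : ℤ) - (jmpCount σ v (prv v) : ℤ)

/-- The flow `F(σ, i₀, j₀)` through the vertex `v = (i₀,j₀)`. -/
def flow {m : ℕ} (σ : List (Move m)) (v : Vtx m) : ℚ :=
  (dflow σ v : ℚ) / 2

/-- `P` is the starting position: switches on `(i,1)`, `(i,3)`, `(0,3i-1)`
(0-based: `tri i 0`, `tri i 2`, `cycle (pairC i 1)`), the chip on some cycle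
vertex not of the form `(0,3i-1)`, and all other vertices empty. -/
def IsStarting {m : ℕ} (P : Pos m) : Prop :=
  (∀ i : Fin m,
    P.occ (Vtx.tri i 0) = Occ.switch ∧
    P.occ (Vtx.tri i 1) = Occ.empty ∧
    P.occ (Vtx.tri i 2) = Occ.switch ∧
    P.occ (Vtx.cycle (pairC i 1)) = Occ.switch) ∧
  ∃ t : ZMod (3 * m),
    (∀ i : Fin m, t ≠ pairC i 1) ∧
    P.occ (Vtx.cycle t) = Occ.chip ∧
    ∀ s : ZMod (3 * m), s ≠ t → (∀ i : Fin m, s ≠ pairC i 1) →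
      P.occ (Vtx.cycle s) = Occ.empty

end AuxGame

namespace AuxGame

open Classical in
/-- Indicator of a vertex being occupied. -/
noncomputable def phi {m : ℕ} (P : Pos m) (v : Vtx m) : ℤ :=
  if P.occ v = Occ.empty then 0 else 1

/-- Indicator that a move goes from `u` to `v`. -/
def ind {m : ℕ} (mv : Move m) (u v : Vtx m) : ℤ :=
  if mv.from' = u ∧ mv.to' = v then 1 else 0

lemma jmpCount_cons {m : ℕ} (mv : Move m) (σ : List (Move m)) (u v : Vtx m) :
    (jmpCount (mv :: σ) u v : ℤ) = ind mv u v + jmpCount σ u v := by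
  unfold jmpCount ind
  by_cases h : mv.from' = u ∧ mv.to' = v
  · simp [List.filter_cons, h]; ring
  · simp only [List.filter_cons, h]; simp

lemma two_ne {m : ℕ} (hm : 1 ≤ m) (t : ZMod (3 * m)) : t + 1 ≠ t - 1 := by
  intro h
  have h2 : ((2 : ℕ) : ZMod (3 * m)) = 0 := by
    push_cast
    linear_combination h
  rw [ZMod.natCast_eq_zero_iff] at h2
  have := Nat.le_of_dvd (by norm_num) h2
  omega

lemma one_ne {m : ℕ} (hm : 1 ≤ m) : (1 : ZMod (3 * m)) ≠ 0 := by
  intro h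
  have h2 : ((1 : ℕ) : ZMod (3 * m)) = 0 := by
    push_cast
    exact h
  rw [ZMod.natCast_eq_zero_iff] at h2
  have := Nat.le_of_dvd (by norm_num) h2
  omega

lemma step {m : ℕ} (hm : 1 ≤ m) (mv : Move m) (h : mv.Legal) (t : ZMod (3 * m)) :
    ind mv (.cycle (t - 1)) (.cycle t) - ind mv (.cycle t) (.cycle (t - 1))
    - ind mv (.cycle t) (.cycle (t + 1)) + ind mv (.cycle (t + 1)) (.cycle t)
    = phi mv.dst (.cycle t) - phi mv.src (.cycle t) := by
  obtain ⟨P, Q, u, v⟩ := mv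
  obtain ⟨h1, h2, h3, h4, h5⟩ := h
  dsimp only at h1 h2 h3 h4 h5
  have h6 := h5 (.cycle t)
  have n1 := one_ne hm
  unfold ind phi
  dsimp only
  rcases h2 with ⟨ha, he⟩ | ⟨ha, he⟩
  · rcases u with a | ⟨i, j⟩ <;> rcases v with b | ⟨i', j'⟩ <;> simp only [Adjacent] at ha
    · have n2 := two_ne hm a
      have n3 := two_ne hm t
      have n4 : a + 1 ≠ a := by simpa using n1
      have n5 : a - 1 ≠ a := by simpa using n1
      have e1 : a = t - 1 ↔ a + 1 = t := eq_sub_iff_add_eq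
      have e2 : a = t + 1 ↔ a - 1 = t := sub_eq_iff_eq_add.symm
      simp only [Vtx.cycle.injEq, ne_eq] at *
      rcases ha with rfl | rfl
      · by_cases c1 : a = t
        · subst c1; simp_all
        · by_cases c2 : a + 1 = t
          · subst c2; simp_all; exact fun h => n2 h.symm
          · have c3 : ¬ (t = a) := fun h => c1 h.symm
            have c4 : ¬ (t = a + 1) := fun h => c2 h.symm
            simp [c1, c2, h6 c3 c4]
      · by_cases c1 : a = t
        · subst c1; simp_all; exact fun h => n3 h.symm
        · by_cases c2 : a - 1 = t
          · subst c2; simp_all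
          · have c3 : ¬ (t = a) := fun h => c1 h.symm
            have c4 : ¬ (t = a - 1) := fun h => c2 h.symm
            simp [c1, c2, h6 c3 c4]
    · simp_all
  · rcases u with a | ⟨i, j⟩ <;> rcases v with b | ⟨i', j'⟩ <;> simp only [IsPair] at ha
    · by_cases c : a = t
      · rw [c] at h1 h4
        simp [h1, h4, he]
      · have := h6 (by simpa using fun h => c h.symm) (by simp)
        simp [this]
    · by_cases c : b = t
      · rw [c] at h3 he
        simp [h3, he]
      · have := h6 (by simp) (by simpa using fun h => c h.symm)
        simp [this]

lemma total {m : ℕ} (hm : 1 ≤ m) (σ : List (Move m)) (A B : Pos m) (h : Leads σ A B)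
    (t : ZMod (3 * m)) :
    (jmpCount σ (.cycle (t - 1)) (.cycle t) : ℤ) - jmpCount σ (.cycle t) (.cycle (t - 1))
    - jmpCount σ (.cycle t) (.cycle (t + 1)) + jmpCount σ (.cycle (t + 1)) (.cycle t)
    = phi B (.cycle t) - phi A (.cycle t) := by
  induction h with
  | nil A => simp [jmpCount]
  | cons mv σ B hl _ ih =>
    have := step hm mv hl t
    simp only [jmpCount_cons]
    linarith

end AuxGame

open AuxGame in
/-- For every legal sequence `σ` whose initial position equals
its resulting position, the flow through the cycle vertices does not depend on
the vertex: `F(σ,0,t) = F(σ,0,t')` for all `t, t' ∈ ℤ/3m`. -/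
theorem statement7 (m : ℕ) (hm : 1 ≤ m) (A : Pos m) (σ : List (Move m))
    (hσ : Leads σ A A) (t t' : ZMod (3 * m)) :
    flow σ (Vtx.cycle t) = flow σ (Vtx.cycle t') := by
  have key : ∀ s : ZMod (3 * m), dflow σ (.cycle (s + 1)) = dflow σ (.cycle s) := by
    intro s
    have h1 := total hm σ A A hσ s
    have h2 := total hm σ A A hσ (s + 1)
    simp only [dflow, prv, nxt, add_sub_cancel_right] at *
    linarith
  have all : ∀ n : ℕ, dflow σ (.cycle (n : ZMod (3 * m))) = dflow σ (.cycle 0) := by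
    intro n
    induction n with
    | zero => simp
    | succ k ih => rw [Nat.cast_succ, key, ih]
  haveI : NeZero (3 * m) := ⟨by omega⟩
  have e : ∀ s : ZMod (3 * m), dflow σ (.cycle s) = dflow σ (.cycle 0) := by
    intro s
    have := all s.val
    rwa [ZMod.natCast_zmod_val] at this
  unfold flow
  rw [e t, e t']
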